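/- arXiv:1610.10090 — 2 statements merged into one kernel-verified Lean document; each statement's English description precedes it below -/
import Mathlib

section
/- Let N ≥ 3, let k ∈ {1,…,N}, and let δ : {1,…,N−1} → {1,…,N} be the increasing bijection onto {1,…,N}∖{k}. Define σ'_{ij} = σ_{δ(i)δ(j)} and let H' be the (N−1)-phase potential free energy density built from σ' (with the same β). If c ∈ ℝ^N satisfies c_k = 0, then H(c₁,…,c_N) = H'(c_{δ(1)},…,c_{δ(N−1)}). (Verification of assumption (𝒜1): the potential free energy density satisfies the reduction consistency property (𝒞2) when one fluid phase is absent.) -/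
open Function

theorem sum_sum_comp_of_injective {ι κ M : Type*} [Fintype ι] [Fintype κ] [AddCommMonoid M]
    {δ : ι → κ} (hδ : Injective δ) {F : κ → κ → M}
    (hF : ∀ i j, i ∉ Set.range δ ∨ j ∉ Set.range δ → F i j = 0) :
    ∑ i, ∑ j, F (δ i) (δ j) = ∑ i, ∑ j, F i j := by
  simp only [← Fintype.sum_prod_type']
  refine Fintype.sum_of_injective (Prod.map δ δ) (hδ.prodMap hδ) _ _ ?_ fun _ ↦ rfl
  rintro ⟨i, j⟩ hij
  rw [Set.range_prodMap, Set.mem_prod, not_and_or] at hij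
  exact hF i j hij

/-- The amount by which `f` fails to be additive at `(x, y)`: the contribution to the potential free
energy of a pair of phases with volume fractions `x` and `y`, per unit of surface tension. -/
def additivityDefect {A B : Type*} [Add A] [Add B] [Sub B] (f : A → B) (x y : A) : B :=
  f x + f y - f (x + y)

section additivityDefect

variable {A B : Type*} [AddZeroClass A] [AddGroup B] {f : A → B}

theorem additivityDefect_zero_left (hf : f 0 = 0) (y : A) : additivityDefect f 0 y = 0 := by
  rw [additivityDefect, hf, zero_add, zero_add, sub_self]

theorem additivityDefect_zero_right (hf : f 0 = 0) (x : A) : additivityDefect f x 0 = 0 := by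
  rw [additivityDefect, hf, add_zero, add_zero, sub_self]

end additivityDefect

section pairEnergy

variable {ι κ A R : Type*} [Fintype ι] [Fintype κ] [AddZeroClass A] [NonUnitalNonAssocRing R]

/-- The pairwise interaction energy of phases with volume fractions `c i`, interaction weights
`w i j` and bulk potential `f`. The potential free energy density `H` is `β / 2` times this energy
for `w i j = σ i j / 2`; the factor stays outside so that no division is needed. -/
def pairEnergy (w : κ → κ → R) (f : A → R) (c : κ → A) : R :=
  ∑ i, ∑ j, w i j * additivityDefect f (c i) (c j)

theorem stmt10_general (w : κ → κ → R) {f : A → R} (hf : f 0 = 0) {δ : ι → κ} (hδ : Injective δ)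
    {c : κ → A} (hc : ∀ i ∉ Set.range δ, c i = 0) :
    pairEnergy w f c = pairEnergy (fun i j ↦ w (δ i) (δ j)) f (c ∘ δ) := by
  refine (sum_sum_comp_of_injective hδ ?_).symm
  rintro i j (hi | hj)
  · rw [hc i hi, additivityDefect_zero_left hf, mul_zero]
  · rw [hc j hj, additivityDefect_zero_right hf, mul_zero]

end pairEnergy

/-- assumption (𝒜1), consistency (𝒞2): If fluid `k` is absent
(`c_k = 0`) and `δ` is the increasing bijection of `{1,…,N−1}` onto `{1,…,N}∖{k}`,
then the N-phase potential free energy density built from `σ` evaluated at `c`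
equals the (N−1)-phase one built from `σ'_{ij} = σ_{δ(i)δ(j)}` evaluated at
`(c_{δ(1)},…,c_{δ(N−1)})`. -/
theorem stmt10 (N : ℕ) (hN : 3 ≤ N) (η : ℝ) (hη : 0 < η)
    (β : ℝ) (hβ : β = 6 / Real.sqrt 2 / η)
    (σ : Fin N → Fin N → ℝ)
    (hσsymm : ∀ i j, σ i j = σ j i)
    (hσdiag : ∀ i, σ i i = 0)
    (f : ℝ → ℝ) (hf : ∀ x, f x = x ^ 2 * (1 - x) ^ 2)
    (k : Fin N)
    (δ : Fin (N - 1) → Fin N) (hδmono : StrictMono δ) (hδrange : Set.range δ = {k}ᶜ)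
    (c : Fin N → ℝ) (hck : c k = 0) :
    β / 2 * ∑ i : Fin N, ∑ j : Fin N, σ i j / 2 * (f (c i) + f (c j) - f (c i + c j))
      = β / 2 * ∑ i : Fin (N - 1), ∑ j : Fin (N - 1),
          σ (δ i) (δ j) / 2 * (f (c (δ i)) + f (c (δ j)) - f (c (δ i) + c (δ j))) := by
  exact congrArg (β / 2 * ·) <| stmt10_general (fun i j ↦ σ i j / 2) (by simp [hf]) hδmono.injective
    (by simpa [hδrange] using hck)
end

section
/- Let N ≥ 3, η > 0, and σ = (σ_{ij}) symmetric with σ_{ij} > 0 for i ≠ j and σ_{ii} = 0. Let t ∈ ℝ^N with t_N = 0 and define ξ_{ij} = (√2/(η·σ_{ij}))·(σ_{iN}·t_i − σ_{jN}·t_j) for i ≠ j, ξ_{ii} = 0. Define the (N−1)-phase coefficients ξ' as in the removal of phase N (σ'_{ij} = σ_{ij}, t'_i = (σ_{iN}t_i − σ_{N−1,N}t_{N−1})/σ_{i,N−1} for i ≤ N−2, t'_{N−1} = 0). Then for every c ∈ ℝ^N with c_N = 0, writing c' = (c_1,…,c_{N−1}), one has Σ_{j=1}^{N−1} ξ'_{ij}·c'_i·c'_j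 = Σ_{j=1}^{N} ξ_{ij}·c_i·c_j for each 1 ≤ i ≤ N−1, and Σ_{j=1}^{N} ξ_{Nj}·c_N·c_j = 0. (The N-phase contact-angle boundary condition reduces to the (N−1)-phase one when fluid N is absent.) -/
/-
The coefficient `ξ i j` depends on the contact angles only through the products `σ i n * t i`, up
to an additive constant independent of `i`, because only their differences occur. The reduced
cosines are chosen so that `σ i m * t' i = σ i n * t i - σ m n * t m`: passing from the reference
phase `n` to `m` shifts all these products by the same constant and so leaves `ξ` unchanged.
-/

theorem notMem_range_castLE_sub_one_iff {N : ℕ} (hN : N - 1 < N) {i : Fin N} :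
    i ∉ Set.range (Fin.castLE (N.sub_le 1)) ↔ i = ⟨N - 1, hN⟩ := by
  simp only [Fin.range_castLE, Set.mem_ofPred_eq, Fin.ext_iff]
  omega

section ContactAngle

open Function

variable {K ι κ : Type*} [Field K]

/-- The coefficients `ξ i j` of the contact-angle boundary condition, for surface tensions `σ` and
cosines `t` of the contact angles measured against the reference phase `n`. The prefactor
`√2 / (η * σ i j)` of the paper is an arbitrary weight `w i j`. The diagonal vanishes without a
case distinction. -/
def contactCoeff (w σ : ι → ι → K) (n : ι) (t : ι → K) (i j : ι) : K :=
  w i j * (σ i n * t i - σ j n * t j)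

/-- The cosines of the contact angles measured against the phase `m`, computed from the cosines `t`
measured against `n`. At `i = m` the numerator vanishes, so the value is `0` whatever `σ m m` is. -/
def reducedCosine (σ : ι → ι → K) (n m : ι) (t : ι → K) (i : ι) : K :=
  (σ i n * t i - σ m n * t m) / σ i m

/-- The right-hand side of the boundary condition `n·∇c_i = Σ_j ξ_{ij} c_i c_j` for phase `i`, with
arbitrary coefficients `ξ`. -/
def contactFlux [Fintype ι] (ξ : ι → ι → K) (c : ι → K) (i : ι) : K :=
  ∑ j, ξ i j * c i * c j

theorem contactCoeff_self (w σ : ι → ι → K) (n : ι) (t : ι → K) (i : ι) :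
    contactCoeff w σ n t i i = 0 := by
  simp [contactCoeff]

theorem eq_contactCoeff {w σ : ι → ι → K} {n : ι} {t : ι → K} {ξ : ι → ι → K}
    (hξ : ∀ i j, i ≠ j → ξ i j = contactCoeff w σ n t i j) (hξdiag : ∀ i, ξ i i = 0) :
    ξ = contactCoeff w σ n t := by
  funext i j
  obtain rfl | hij := eq_or_ne i j
  · rw [hξdiag, contactCoeff_self]
  · exact hξ i j hij

theorem reducedCosine_self (σ : ι → ι → K) (n m : ι) (t : ι → K) :
    reducedCosine σ n m t m = 0 := by
  simp [reducedCosine]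

theorem mul_reducedCosine {σ : ι → ι → K} {m i : ι} (hσ : i ≠ m → σ i m ≠ 0) (n : ι) (t : ι → K) :
    σ i m * reducedCosine σ n m t i = σ i n * t i - σ m n * t m := by
  obtain rfl | him := eq_or_ne i m
  · rw [reducedCosine_self, mul_zero, sub_self]
  · exact mul_div_cancel₀ _ (hσ him)

theorem contactCoeff_reducedCosine {σ : ι → ι → K} {m i j : ι} (hi : i ≠ m → σ i m ≠ 0)
    (hj : j ≠ m → σ j m ≠ 0) (w : ι → ι → K) (n : ι) (t : ι → K) :
    contactCoeff w σ m (reducedCosine σ n m t) i j = contactCoeff w σ n t i j := by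
  rw [contactCoeff, mul_reducedCosine hi, mul_reducedCosine hj, sub_sub_sub_cancel_right,
    contactCoeff]

theorem contactFlux_eq_zero [Fintype ι] (ξ : ι → ι → K) {c : ι → K} {i : ι} (hi : c i = 0) :
    contactFlux ξ c i = 0 := by
  simp [contactFlux, hi]

theorem contactFlux_onFun [Fintype ι] [Fintype κ] {f : κ → ι} (hf : Injective f) (ξ : ι → ι → K)
    {c : ι → K} (hc : ∀ i ∉ Set.range f, c i = 0) (i : κ) :
    contactFlux (ξ on f) (c ∘ f) i = contactFlux ξ c (f i) :=
  Fintype.sum_of_injective f hf _ _ (fun j hj => by rw [hc j hj, mul_zero]) fun _ => rfl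

/-- The phases that are kept are indexed by `κ` through `f`, so that any number of phases may be
removed at once. -/
theorem stmt16_general [Fintype ι] [Fintype κ] {f : κ → ι} (hf : Injective f)
    {w σ : ι → ι → K} {n : ι} {m : κ} (hσ : ∀ i, i ≠ m → σ (f i) (f m) ≠ 0)
    {t : ι → K} {ξ : ι → ι → K}
    (hξ : ∀ i j, i ≠ j → ξ i j = contactCoeff w σ n t i j) (hξdiag : ∀ i, ξ i i = 0)
    {t' : κ → K} (ht' : ∀ i, i ≠ m → t' i = reducedCosine σ n (f m) t (f i)) (ht'm : t' m = 0)
    {ξ' : κ → κ → K}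
    (hξ' : ∀ i j, i ≠ j → ξ' i j = contactCoeff (w on f) (σ on f) m t' i j)
    (hξ'diag : ∀ i, ξ' i i = 0) {c : ι → K} (hc : ∀ i ∉ Set.range f, c i = 0) :
    (∀ i, contactFlux ξ' (c ∘ f) i = contactFlux ξ c (f i)) ∧
      ∀ i ∉ Set.range f, contactFlux ξ c i = 0 := by
  have t'_eq : t' = reducedCosine σ n (f m) t ∘ f := by
    funext i
    obtain rfl | him := eq_or_ne i m
    · rw [ht'm, comp_apply, reducedCosine_self]
    · exact ht' i him
  have hσf (i : κ) (him : f i ≠ f m) : σ (f i) (f m) ≠ 0 := hσ i (ne_of_apply_ne f him)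
  have ξ'_eq : ξ' = (ξ on f) := by
    rw [eq_contactCoeff hξ' hξ'diag, eq_contactCoeff hξ hξdiag, t'_eq]
    funext i j
    exact contactCoeff_reducedCosine (hσf i) (hσf j) w n t
  refine ⟨fun i => ?_, fun i hi => contactFlux_eq_zero ξ (hc i hi)⟩
  rw [ξ'_eq, contactFlux_onFun hf ξ hc]

end ContactAngle

/-- Removal of phase `N`. With `ξ` built from `σ, t` (`t_N = 0`) and the
reduced coefficients `ξ'` built from `σ'_{ij} = σ_{ij}`,
`t'_i = (σ_{iN}t_i − σ_{N−1,N}t_{N−1})/σ_{i,N−1}` for `i ≤ N−2`, `t'_{N−1} = 0`: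
for every `c` with `c_N = 0`, `Σ_{j=1}^{N−1} ξ'_{ij} c_i c_j = Σ_{j=1}^{N} ξ_{ij} c_i c_j`
for each `i ≤ N−1`, and `Σ_{j=1}^{N} ξ_{Nj} c_N c_j = 0`. -/
theorem stmt16 (N : ℕ) (hN : 3 ≤ N) (η : ℝ) (hη : 0 < η)
    (σ : Fin N → Fin N → ℝ)
    (hσsymm : ∀ i j, σ i j = σ j i)
    (hσdiag : ∀ i, σ i i = 0)
    (hσpos : ∀ i j, i ≠ j → 0 < σ i j)
    (t : Fin N → ℝ) (htN : t ⟨N - 1, by omega⟩ = 0)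
    (ξ : Fin N → Fin N → ℝ)
    (hξ : ∀ i j, i ≠ j → ξ i j = Real.sqrt 2 / (η * σ i j) *
      (σ i ⟨N - 1, by omega⟩ * t i - σ j ⟨N - 1, by omega⟩ * t j))
    (hξdiag : ∀ i, ξ i i = 0)
    (t' : Fin (N - 1) → ℝ)
    (ht' : ∀ (i : Fin (N - 1)), (i : ℕ) < N - 2 → t' i =
      (σ (Fin.castLE (N.sub_le 1) i) ⟨N - 1, by omega⟩ * t (Fin.castLE (N.sub_le 1) i)
        - σ ⟨N - 2, by omega⟩ ⟨N - 1, by omega⟩ * t ⟨N - 2, by omega⟩)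
      / σ (Fin.castLE (N.sub_le 1) i) ⟨N - 2, by omega⟩)
    (ht'last : t' ⟨N - 2, by omega⟩ = 0)
    (ξ' : Fin (N - 1) → Fin (N - 1) → ℝ)
    (hξ' : ∀ i j : Fin (N - 1), i ≠ j → ξ' i j =
      Real.sqrt 2 / (η * σ (Fin.castLE (N.sub_le 1) i) (Fin.castLE (N.sub_le 1) j)) *
        (σ (Fin.castLE (N.sub_le 1) i) ⟨N - 2, by omega⟩ * t' i
          - σ (Fin.castLE (N.sub_le 1) j) ⟨N - 2, by omega⟩ * t' j))
    (hξ'diag : ∀ i, ξ' i i = 0) :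
    ∀ c : Fin N → ℝ, c ⟨N - 1, by omega⟩ = 0 →
      (∀ i : Fin (N - 1),
        ∑ j : Fin (N - 1), ξ' i j * c (Fin.castLE (N.sub_le 1) i) * c (Fin.castLE (N.sub_le 1) j)
          = ∑ j : Fin N, ξ (Fin.castLE (N.sub_le 1) i) j * c (Fin.castLE (N.sub_le 1) i) * c j)
      ∧ ∑ j : Fin N, ξ ⟨N - 1, by omega⟩ j * c ⟨N - 1, by omega⟩ * c j = 0 := by
  intro c hc
  have lt_of_ne (i : Fin (N - 1)) (hi : i ≠ ⟨N - 2, by omega⟩) : (i : ℕ) < N - 2 := by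
    have val_ne : (i : ℕ) ≠ N - 2 := Fin.val_ne_of_ne hi
    omega
  have h := stmt16_general (w := fun i j => √2 / (η * σ i j)) (Fin.castLE_injective (N.sub_le 1))
    (fun i hi => (hσpos _ _ ((Fin.castLE_injective _).ne hi)).ne') hξ hξdiag
    (fun i hi => ht' i (lt_of_ne i hi)) ht'last hξ' hξ'diag (c := c)
    (fun i hi => (notMem_range_castLE_sub_one_iff _).1 hi ▸ hc)
  exact ⟨h.1, h.2 _ ((notMem_range_castLE_sub_one_iff _).2 rfl)⟩
end
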